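/- For every integer n ≥ 0 and every complex number x, the determinant of the 2n×2n matrix whose (i,j) entry is (j−i)·N_{i+j−2}(x) for 1 ≤ i,j ≤ 2n equals x^{2n²}·(∏_{k=0}^{n−1} (4k+1))². -/

import Mathlib

/-- The `n`-th Narayana polynomial, `N_0(x) = 1` and
`N_n(x) = ∑_{k=0}^{n} (1/n)·C(n,k)·C(n,k-1)·x^k` for `n ≥ 1`
(the binomial coefficient `C(n,k-1)` being `0` for `k = 0`). -/
noncomputable def narayana (n : ℕ) (x : ℂ) : ℂ :=
  if n = 0 then 1
  else ∑ k ∈ Finset.range (n + 1),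
    (1 / (n : ℂ)) * (n.choose k) * (if k = 0 then 0 else (n.choose (k - 1) : ℂ)) * x ^ k

/-!
For `m ≥ 1` the value `N_m(x) / x` is the `(m - 1)`-st moment of the semicircle law with mean
`1 + x` and variance `x`: this moment counts weighted lattice paths staying above a line, and the
reflection principle turns the count into the Narayana sum. Hence, up to a factor `x`, the `(i, j)`
entry is the value at `(X^i, X^j)` of the alternating form `(f, g) ↦ L (f g' - f' g)`, where `L` is
the semicircle functional. The determinant of a form is the same in all monic bases: a translation
makes the law centred, and in the basis of Dickson (rescaled Chebyshev) polynomials of the first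
kind the form is tridiagonal, because their derivatives are multiples of the polynomials of the
second kind, which are orthogonal for `L`.
-/

section

open Polynomial Finset

variable {R : Type*}

section SkewTridiagonal

variable [CommRing R]

/-- The skew-symmetric tridiagonal matrix of size `N` with superdiagonal `b 0, b 1, …`. -/
def skewTridiagonal (b : ℕ → R) (N : ℕ) : Matrix (Fin N) (Fin N) R :=
  Matrix.of fun i j =>
    if (j : ℕ) = i + 1 then b i else if (i : ℕ) = j + 1 then -b j else 0

lemma det_skewTridiagonal_add_two (b : ℕ → R) (N : ℕ) :
    (skewTridiagonal b (N + 2)).det =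
      b 0 ^ 2 * (skewTridiagonal (fun i => b (i + 2)) N).det := by
  have one_succAbove_zero : (1 : Fin (N + 2)).succAbove 0 = 0 := by
    rw [← Fin.succ_zero_eq_one, Fin.succ_succAbove_zero]
  have one_succAbove_succ (j : Fin N) : (1 : Fin (N + 2)).succAbove j.succ = j.succ.succ := by
    rw [← Fin.succ_zero_eq_one, Fin.succ_succAbove_succ, Fin.zero_succAbove]
  have minor_eq : ((skewTridiagonal b (N + 2)).submatrix Fin.succ (Fin.succAbove 1)).submatrix
      (Fin.succAbove 0) Fin.succ = skewTridiagonal (fun i => b (i + 2)) N := by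
    ext i j
    simp [skewTridiagonal, one_succAbove_succ, add_assoc]
  rw [Matrix.det_succ_row_zero, Fintype.sum_eq_single 1,
    Matrix.det_succ_column_zero, Fintype.sum_eq_single 0, minor_eq]
  · simp [skewTridiagonal, one_succAbove_zero]
    ring
  · intro i hi
    simp [skewTridiagonal, one_succAbove_zero, Fin.val_eq_zero_iff, hi]
  · intro j hj
    have hj' : (j : ℕ) ≠ 1 := fun h => hj (Fin.ext (by simpa using h))
    simp [skewTridiagonal, hj']

theorem det_skewTridiagonal (b : ℕ → R) (n : ℕ) :
    (skewTridiagonal b (2 * n)).det = ∏ k ∈ range n, b (2 * k) ^ 2 := by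
  induction n generalizing b with
  | zero => simp
  | succ n ih =>
    rw [mul_add_one, det_skewTridiagonal_add_two, ih, prod_range_succ', mul_comm]
    rfl

end SkewTridiagonal

section MonicBasis

lemma bilin_eq_sum_coeff [CommSemiring R] (B : R[X] →ₗ[R] R[X] →ₗ[R] R) {f g : R[X]} {n : ℕ}
    (hf : f.natDegree < n) (hg : g.natDegree < n) :
    B f g = ∑ i : Fin n, ∑ j : Fin n, f.coeff i * B (X ^ (i : ℕ)) (X ^ (j : ℕ)) * g.coeff j := by
  conv_lhs => rw [f.as_sum_range_C_mul_X_pow' hf, g.as_sum_range_C_mul_X_pow' hg]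
  simp only [← smul_eq_C_mul, map_sum, map_smul, LinearMap.sum_apply, LinearMap.smul_apply,
    smul_eq_mul, sum_range, mul_sum]
  rw [sum_comm]
  exact sum_congr rfl fun i _ => sum_congr rfl fun j _ => by ring

theorem det_bilin_of_monic [CommRing R] (B : R[X] →ₗ[R] R[X] →ₗ[R] R) {n : ℕ} (p : Fin n → R[X])
    (hp : ∀ i, IsMonicOfDegree (p i) i) :
    (Matrix.of fun i j => B (p i) (p j)).det =
      (Matrix.of fun i j : Fin n => B (X ^ (i : ℕ)) (X ^ (j : ℕ))).det := by
  let P : Matrix (Fin n) (Fin n) R := Matrix.of fun i j => (p j).coeff i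
  have det_P : P.det = 1 :=
    Matrix.det_matrixOfPolynomials p (fun i => (hp i).natDegree_eq) fun i => (hp i).monic
  have congruence : (Matrix.of fun i j => B (p i) (p j)) =
      P.transpose * (Matrix.of fun i j : Fin n => B (X ^ (i : ℕ)) (X ^ (j : ℕ))) * P := by
    ext i j
    rw [Matrix.of_apply, bilin_eq_sum_coeff B ((hp i).natDegree_eq.trans_lt i.2)
      ((hp j).natDegree_eq.trans_lt j.2), sum_comm]
    simp [P, Matrix.mul_apply, sum_mul]
  rw [congruence, Matrix.det_mul, Matrix.det_mul, Matrix.det_transpose, det_P, one_mul, mul_one]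

end MonicBasis

section Dickson

variable [CommRing R]

lemma isMonicOfDegree_dickson_succ [Nontrivial R] (k : ℕ) (a : R) (n : ℕ) :
    IsMonicOfDegree (dickson k a (n + 1)) (n + 1) := by
  induction n using Nat.twoStepInduction with
  | zero => simpa using isMonicOfDegree_X R
  | one =>
    have three_sub_eq : (3 - k : R[X]) = C (3 - k : R) := by
      rw [C_sub, map_ofNat, map_natCast]
    rw [dickson_two, three_sub_eq, ← C_mul]
    exact (isMonicOfDegree_X_pow R 2).sub ((natDegree_C _).trans_lt two_pos)
  | more n ih₀ ih₁ =>
    have leading : IsMonicOfDegree (X * dickson k a (n + 2)) (n + 3) :=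
      add_comm 1 (n + 2) ▸ (isMonicOfDegree_X R).mul ih₁
    have lower : (C a * dickson k a (n + 1)).natDegree < n + 3 :=
      (natDegree_C_mul_le _ _).trans_lt (ih₀.natDegree_eq.trans_lt (by omega))
    exact leading.sub lower

lemma dickson_two_zero_eq_one (a : R) : dickson 2 a 0 = 1 := by
  norm_num

lemma dickson_one_add_two (a : R) (n : ℕ) :
    dickson 1 a (n + 2) = dickson 2 a (n + 2) - C a * dickson 2 a n := by
  induction n using Nat.twoStepInduction with
  | zero => simp; ring
  | one => simp; ring
  | more n ih₀ ih₁ =>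
    rw [dickson_add_two 1, ih₀, ih₁, dickson_add_two 2 a (n + 2), dickson_add_two 2 a n]
    ring

lemma derivative_dickson_one_succ (a : R) (n : ℕ) :
    derivative (dickson 1 a (n + 1)) = ((n : R) + 1) • dickson 2 a n := by
  simp only [smul_eq_C_mul, map_add, map_natCast, map_one]
  induction n using Nat.twoStepInduction with
  | zero => simp; norm_num
  | one => simp; ring
  | more n ih₀ ih₁ =>
    rw [dickson_add_two, derivative_sub, derivative_mul, derivative_C_mul, ih₀, ih₁,
      dickson_one_add_two, dickson_add_two 2 a n, derivative_X]
    push_cast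
    ring

/-- The Dickson polynomials of the first kind made into a monic basis: `dickson 1 a 0`, which is
`2`, is replaced by `1`. -/
noncomputable def monicDickson (a : R) : ℕ → R[X]
  | 0 => 1
  | n + 1 => dickson 1 a (n + 1)

lemma isMonicOfDegree_monicDickson [Nontrivial R] (a : R) :
    ∀ n, IsMonicOfDegree (monicDickson a n) n
  | 0 => isMonicOfDegree_zero_iff.mpr rfl
  | n + 1 => isMonicOfDegree_dickson_succ 1 a n

lemma derivative_monicDickson_succ (a : R) (n : ℕ) :
    derivative (monicDickson a (n + 1)) = ((n : R) + 1) • dickson 2 a n :=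
  derivative_dickson_one_succ a n

end Dickson

section JacobiOperator

variable [CommSemiring R]

/-- The Jacobi operator `(J v) k = v (k - 1) + c * v (k + 1)`, with `v (-1) = 0`, of the centred
semicircle law of variance `c`. -/
def jacobiOperator (c : R) : Module.End R (ℕ → R) where
  toFun v
    | 0 => c * v 1
    | k + 1 => v k + c * v (k + 2)
  map_add' v w := by ext (_ | k) <;> simp only [Pi.add_apply] <;> ring
  map_smul' r v := by
    ext (_ | k) <;> simp only [Pi.smul_apply, smul_eq_mul, RingHom.id_apply] <;> ring

@[simp]
lemma jacobiOperator_apply_zero (c : R) (v : ℕ → R) : jacobiOperator c v 0 = c * v 1 :=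
  rfl

@[simp]
lemma jacobiOperator_apply_succ (c : R) (v : ℕ → R) (k : ℕ) :
    jacobiOperator c v (k + 1) = v k + c * v (k + 2) :=
  rfl

/-- The moment functional `p ↦ ⟨e₀, p(J) e₀⟩` of the centred semicircle law of variance `c`. -/
noncomputable def semicircleFunctional (c : R) : R[X] →ₗ[R] R :=
  LinearMap.proj 0 ∘ₗ LinearMap.applyₗ (Pi.single 0 1) ∘ₗ (aeval (jacobiOperator c)).toLinearMap

lemma semicircleFunctional_apply (c : R) (p : R[X]) :
    semicircleFunctional c p = aeval (jacobiOperator c) p (Pi.single 0 1) 0 :=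
  rfl

end JacobiOperator

section Semicircle

variable [CommRing R]

lemma aeval_jacobiOperator_dickson_two_apply_zero (c : R) (k : ℕ) (v : ℕ → R) :
    aeval (jacobiOperator c) (dickson 2 c k) v 0 = c ^ k * v k := by
  induction k using Nat.twoStepInduction generalizing v with
  | zero => norm_num
  | one => simp
  | more k ih₀ ih₁ =>
    rw [dickson_add_two, mul_comm X]
    simp only [map_sub, map_mul, aeval_X, aeval_C, LinearMap.sub_apply, Module.End.mul_apply,
      Module.algebraMap_end_apply, Pi.sub_apply, Pi.smul_apply, ih₀, ih₁,
      jacobiOperator_apply_succ, smul_eq_mul]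
    ring

lemma aeval_jacobiOperator_dickson_two_single (c : R) (k : ℕ) :
    aeval (jacobiOperator c) (dickson 2 c k) (Pi.single 0 1) = Pi.single k 1 := by
  induction k using Nat.twoStepInduction with
  | zero => norm_num
  | one => ext (_ | k) <;> simp [Pi.single_apply]
  | more k ih₀ ih₁ =>
    simp only [dickson_add_two, map_sub, map_mul, aeval_X, aeval_C, LinearMap.sub_apply,
      Module.End.mul_apply, Module.algebraMap_end_apply, ih₀, ih₁]
    ext (_ | j)
    · rcases k with _ | k <;> simp
    · simp [Pi.single_apply]

theorem semicircleFunctional_dickson_two_mul_dickson_two (c : R) (m n : ℕ) :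
    semicircleFunctional c (dickson 2 c m * dickson 2 c n) = if m = n then c ^ m else 0 := by
  rw [semicircleFunctional_apply, map_mul, Module.End.mul_apply,
    aeval_jacobiOperator_dickson_two_single, aeval_jacobiOperator_dickson_two_apply_zero,
    Pi.single_apply, mul_ite, mul_one, mul_zero]

lemma semicircleFunctional_monicDickson_mul_dickson_two (c : R) {m n : ℕ} (hmn : m ≤ n) :
    semicircleFunctional c (monicDickson c m * dickson 2 c n) = if m = n then c ^ m else 0 := by
  rcases m with _ | _ | m
  · rw [monicDickson, ← dickson_two_zero_eq_one c,
      semicircleFunctional_dickson_two_mul_dickson_two]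
  · rw [monicDickson, dickson_one, ← dickson_one 2 c,
      semicircleFunctional_dickson_two_mul_dickson_two]
  · rw [monicDickson, dickson_one_add_two, sub_mul, mul_assoc, ← smul_eq_C_mul, map_sub, map_smul,
      semicircleFunctional_dickson_two_mul_dickson_two,
      semicircleFunctional_dickson_two_mul_dickson_two, if_neg (by omega : m ≠ n), smul_zero,
      sub_zero]

lemma semicircleFunctional_dickson_two_mul_monicDickson (c : R) {m n : ℕ} (hmn : m < n) :
    semicircleFunctional c (dickson 2 c m * monicDickson c n) =
      if n = m + 2 then -c ^ (m + 1) else 0 := by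
  rcases n with _ | _ | n
  · omega
  · obtain rfl : m = 0 := by omega
    rw [monicDickson, dickson_one, ← dickson_one 2 c,
      semicircleFunctional_dickson_two_mul_dickson_two]
    simp
  · rw [monicDickson, dickson_one_add_two, mul_sub, mul_left_comm, ← smul_eq_C_mul, map_sub,
      map_smul, semicircleFunctional_dickson_two_mul_dickson_two,
      semicircleFunctional_dickson_two_mul_dickson_two, if_neg (by omega : m ≠ n + 2), zero_sub,
      smul_eq_mul, mul_ite, mul_zero, ← pow_succ', apply_ite Neg.neg, neg_zero]
    simp only [add_left_inj, eq_comm]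

lemma semicircleFunctional_wronskian_monicDickson_of_lt (c : R) {m n : ℕ} (hmn : m < n) :
    semicircleFunctional c (wronskian (monicDickson c m) (monicDickson c n)) =
      if n = m + 1 then (2 * m + 1) * c ^ m else 0 := by
  obtain ⟨n, rfl⟩ := Nat.exists_eq_add_one_of_ne_zero (Nat.ne_zero_of_lt hmn)
  have right_term :
      semicircleFunctional c (monicDickson c m * derivative (monicDickson c (n + 1))) =
        if n = m then (m + 1) * c ^ m else 0 := by
    rw [derivative_monicDickson_succ, mul_smul_comm, map_smul,
      semicircleFunctional_monicDickson_mul_dickson_two c (Nat.le_of_lt_succ hmn), smul_eq_mul,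
      mul_ite, mul_zero]
    rcases eq_or_ne n m with rfl | hnm
    · simp
    · simp [hnm, hnm.symm]
  have left_term :
      semicircleFunctional c (derivative (monicDickson c m) * monicDickson c (n + 1)) =
        if n = m then -m * c ^ m else 0 := by
    rcases m with _ | m
    · simp [monicDickson]
    · rw [derivative_monicDickson_succ, smul_mul_assoc, map_smul,
        semicircleFunctional_dickson_two_mul_monicDickson c (Nat.lt_of_succ_lt hmn)]
      simp only [add_left_inj, smul_eq_mul, mul_ite, mul_neg, mul_zero, Nat.cast_succ, neg_mul]
  rw [wronskian, map_sub, right_term, left_term]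
  simp only [add_left_inj]
  split_ifs
  · ring
  · exact sub_zero 0

theorem semicircleFunctional_wronskian_monicDickson (c : R) (N : ℕ) :
    (Matrix.of fun i j : Fin N =>
        semicircleFunctional c (wronskian (monicDickson c i) (monicDickson c j))) =
      skewTridiagonal (fun m => (2 * m + 1) * c ^ m) N := by
  ext i j
  simp only [Matrix.of_apply, skewTridiagonal]
  rcases lt_trichotomy (i : ℕ) j with hij | hij | hij
  · rw [semicircleFunctional_wronskian_monicDickson_of_lt c hij,
      if_neg (by omega : (i : ℕ) ≠ j + 1)]
  · rw [hij, wronskian_self_eq_zero, map_zero, if_neg (by omega), if_neg (by omega)]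
  · rw [← wronskian_neg_eq, map_neg, semicircleFunctional_wronskian_monicDickson_of_lt c hij,
      if_neg (by omega : (j : ℕ) ≠ i + 1), apply_ite Neg.neg, neg_zero]

lemma wronskian_pow (p : R[X]) (i j : ℕ) :
    wronskian (p ^ i) (p ^ j) = ((j : R) - i) • (p ^ (i + j - 1) * derivative p) := by
  have pow_pred_mul (k l : ℕ) : (k : R[X]) * p ^ (k - 1) * p ^ l = k * p ^ (k + l - 1) := by
    rcases k with _ | k
    · simp
    · rw [mul_assoc, ← pow_add, Nat.add_sub_cancel, Nat.add_right_comm, Nat.add_sub_cancel]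
  have left_eq := pow_pred_mul i j
  have right_eq := pow_pred_mul j i
  rw [add_comm j i] at right_eq
  simp only [wronskian, derivative_pow, smul_eq_C_mul, C_sub, map_natCast]
  linear_combination derivative p * right_eq - derivative p * left_eq

theorem det_sub_mul_semicircleFunctional (b c : R) (n : ℕ) :
    (Matrix.of fun i j : Fin (2 * n) => ((j.val : R) - (i.val : R)) *
        semicircleFunctional c ((X + C b) ^ (i.val + j.val - 1))).det =
      c ^ (2 * n * (n - 1)) * (∏ k ∈ range n, (4 * (k : R) + 1)) ^ 2 := by
  nontriviality R
  let B := (wronskianBilin R).compr₂ (semicircleFunctional c)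
  have entry (i j : ℕ) : B ((X + C b) ^ i) ((X + C b) ^ j) =
      ((j : R) - i) * semicircleFunctional c ((X + C b) ^ (i + j - 1)) := by
    rw [LinearMap.compr₂_apply, wronskianBilin_apply, wronskian_pow, derivative_X_add_C, mul_one,
      map_smul, smul_eq_mul]
  calc
    _ = (Matrix.of fun i j : Fin (2 * n) => B ((X + C b) ^ (i : ℕ)) ((X + C b) ^ (j : ℕ))).det := by
      simp only [entry]
    _ = (Matrix.of fun i j : Fin (2 * n) => B (monicDickson c i) (monicDickson c j)).det := by
      rw [det_bilin_of_monic B (fun i => monicDickson c i)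
          fun i => isMonicOfDegree_monicDickson c i,
        det_bilin_of_monic B (fun i => (X + C b) ^ (i : ℕ))
          fun i => by simpa using (isMonicOfDegree_X_add_one b).pow i]
    _ = ∏ k ∈ range n, ((2 * (2 * k : ℕ) + 1) * c ^ (2 * k)) ^ 2 := by
      rw [← det_skewTridiagonal fun m => (2 * m + 1) * c ^ m,
        ← semicircleFunctional_wronskian_monicDickson]
      rfl
    _ = _ := by
      have factor (k : ℕ) : 2 * ((2 * k : ℕ) : R) + 1 = 4 * k + 1 := by
        push_cast
        ring
      simp only [factor]
      rw [prod_pow, prod_mul_distrib, prod_pow_eq_pow_sum, ← mul_sum, mul_comm 2,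
        sum_range_id_mul_two]
      ring

lemma sub_mul_add_eq_of_succ {N μ : ℕ → R} {s : R} (hN : ∀ m, N (m + 1) = s * μ m) (i j : ℕ) :
    ((j : R) - i) * N (i + j) = s * ((j - i) * μ (i + j - 1)) := by
  rcases h : i + j with _ | m
  · obtain ⟨rfl, rfl⟩ : i = 0 ∧ j = 0 := by omega
    simp
  · rw [hN, Nat.add_sub_cancel]
    ring

theorem det_narayana_general (b c : R) {N : ℕ → R}
    (hN : ∀ m, N (m + 1) = c * semicircleFunctional c ((X + C b) ^ m)) (n : ℕ) :
    (Matrix.of fun i j : Fin (2 * n) => ((j.val : R) - (i.val : R)) * N (i.val + j.val)).det =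
      c ^ (2 * n ^ 2) * (∏ k ∈ range n, (4 * (k : R) + 1)) ^ 2 := by
  have exponent : 2 * n + 2 * n * (n - 1) = 2 * n ^ 2 := by
    cases n <;> grind
  calc
    _ = (c • Matrix.of fun i j : Fin (2 * n) => ((j.val : R) - i.val) *
          semicircleFunctional c ((X + C b) ^ (i.val + j.val - 1))).det := by
      simp only [sub_mul_add_eq_of_succ hN]
      rfl
    _ = c ^ (2 * n ^ 2) * (∏ k ∈ range n, (4 * (k : R) + 1)) ^ 2 := by
      rw [Matrix.det_smul, Fintype.card_fin, det_sub_mul_semicircleFunctional, ← mul_assoc,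
        ← pow_add, exponent]

end Semicircle

section FreePath

section CommSemiring

variable [CommSemiring R]

/-- The weighted number `∑ j, C(n, j) C(n, j + k) x ^ j` of unrestricted lattice paths of `n` steps
ending at height `k`, where rises, level steps and falls have weights `1`, `1 + x` and `x`: it is
the coefficient of `t ^ k` in `(t + (1 + x) + x / t) ^ n = ((1 + t) * (1 + x / t)) ^ n`. -/
def freePathSum (x : R) (n k : ℕ) : R :=
  ∑ j ∈ range (n + 1), (n.choose j : R) * ((n.choose (j + k) : R) * x ^ j)

lemma sum_range_choose_succ_mul (f : ℕ → R) (n : ℕ) :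
    ∑ j ∈ range (n + 2), ((n + 1).choose j : R) * f j =
      ∑ j ∈ range (n + 1), (n.choose j : R) * (f j + f (j + 1)) := by
  simpa only [mul_add, sum_add_distrib] using sum_choose_succ_mul (fun j _ => f j) n

lemma freePathSum_succ_succ (x : R) (n k : ℕ) :
    freePathSum x (n + 1) (k + 1) = freePathSum x n k + (1 + x) * freePathSum x n (k + 1) +
      x * freePathSum x n (k + 2) := by
  unfold freePathSum
  rw [sum_range_choose_succ_mul fun j => ((n + 1).choose (j + (k + 1)) : R) * x ^ j]
  simp only [mul_sum, ← sum_add_distrib]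
  refine sum_congr rfl fun j _ => ?_
  rw [← add_assoc, Nat.choose_succ_succ' n (j + k), add_right_comm j 1 (k + 1),
    Nat.choose_succ_succ' n (j + (k + 1))]
  push_cast
  simp only [add_assoc, Nat.reduceAdd]
  ring

lemma freePathSum_succ_zero (x : R) (n : ℕ) :
    freePathSum x (n + 1) 0 = (1 + x) * freePathSum x n 0 + 2 * x * freePathSum x n 1 := by
  have pascal_left : ∑ j ∈ range (n + 1), (n.choose j : R) * (((n + 1).choose j : R) * x ^ j) =
      ∑ j ∈ range (n + 1), (n.choose j : R) *
        ((n.choose j : R) * x ^ j + (n.choose (j + 1) : R) * x ^ (j + 1)) := by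
    rw [← sum_range_choose_succ_mul fun j => (n.choose j : R) * x ^ j, sum_range_succ _ (n + 1)]
    simp [mul_left_comm]
  simp only [freePathSum, add_zero]
  rw [sum_range_choose_succ_mul fun j => ((n + 1).choose j : R) * x ^ j]
  simp only [mul_add, sum_add_distrib] at pascal_left ⊢
  rw [pascal_left]
  simp only [mul_sum, ← sum_add_distrib]
  refine sum_congr rfl fun j _ => ?_
  rw [Nat.choose_succ_succ']
  push_cast
  ring

lemma freePathSum_zero (x : R) (k : ℕ) : freePathSum x 0 k = if k = 0 then 1 else 0 := by
  rcases k with _ | k <;> simp [freePathSum]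

end CommSemiring

variable [CommRing R]

/-- Reflection principle: the paths that stay nonnegative are the free ones minus those that meet
height `-1`. -/
theorem aeval_jacobiOperator_X_add_C_pow_single (x : R) (n k : ℕ) :
    aeval (jacobiOperator x) ((X + C (1 + x)) ^ n) (Pi.single 0 1) k =
      freePathSum x n k - x * freePathSum x n (k + 2) := by
  induction n generalizing k with
  | zero => simp [freePathSum_zero, Pi.single_apply]
  | succ n ih =>
    rw [pow_succ', map_mul, Module.End.mul_apply, map_add, aeval_X, aeval_C, LinearMap.add_apply,
      Pi.add_apply, Module.algebraMap_end_apply, Pi.smul_apply, smul_eq_mul]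
    rcases k with _ | k
    · rw [jacobiOperator_apply_zero, ih, ih, freePathSum_succ_zero, freePathSum_succ_succ]
      ring
    · rw [jacobiOperator_apply_succ, ih, ih, ih, freePathSum_succ_succ, freePathSum_succ_succ]
      ring

variable (R) in
lemma succ_mul_choose_sq_sub (n j : ℕ) :
    ((n : R) + 1) * (n.choose (j + 1) ^ 2 - n.choose j * n.choose (j + 2)) =
      (n + 1).choose (j + 2) * (n + 1).choose (j + 1) := by
  have absorb₁ : ((n : R) + 1) * n.choose j = (n + 1).choose (j + 1) * (j + 1) :=
    mod_cast congrArg (Nat.cast : ℕ → R) (Nat.add_one_mul_choose_eq n j)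
  have absorb₂ : ((n : R) + 1) * n.choose (j + 1) = (n + 1).choose (j + 2) * (j + 2) :=
    mod_cast congrArg (Nat.cast : ℕ → R) (Nat.add_one_mul_choose_eq n (j + 1))
  rw [Nat.choose_succ_succ' n (j + 1), Nat.choose_succ_succ' n j] at *
  push_cast at *
  linear_combination ((n.choose j : R) + n.choose (j + 1)) * absorb₂ -
    (n.choose (j + 1) + n.choose (j + 2)) * absorb₁

lemma succ_mul_freePathSum_sub (x : R) (n : ℕ) :
    ((n : R) + 1) * (freePathSum x n 0 - x * freePathSum x n 2) =
      ∑ j ∈ range (n + 1), ((n + 1).choose (j + 1) * (n + 1).choose j : R) * x ^ j := by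
  have free_zero : freePathSum x n 0 =
      ∑ j ∈ range n, (n.choose (j + 1) : R) ^ 2 * x ^ (j + 1) + 1 := by
    simp [freePathSum, sum_range_succ', sq, mul_assoc]
  have free_two : freePathSum x n 2 =
      ∑ j ∈ range n, (n.choose j : R) * n.choose (j + 2) * x ^ j := by
    simp [freePathSum, sum_range_succ, mul_assoc, Nat.choose_eq_zero_of_lt]
  rw [free_zero, free_two, mul_sum, add_sub_right_comm, ← sum_sub_distrib, mul_add, mul_sum,
    sum_range_succ']
  congr 1
  · refine sum_congr rfl fun j _ => ?_
    rw [← succ_mul_choose_sq_sub]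
    ring
  · simp

end FreePath

section Narayana

lemma narayana_succ_eq_sum (n : ℕ) (x : ℂ) :
    narayana (n + 1) x = x * ((∑ j ∈ range (n + 1),
      ((n + 1).choose (j + 1) * (n + 1).choose j : ℂ) * x ^ j) / (n + 1)) := by
  rw [narayana, if_neg n.succ_ne_zero, sum_range_succ', sum_div, mul_sum]
  simp only [if_true, mul_zero, zero_mul, add_zero, Nat.cast_succ]
  refine sum_congr rfl fun j _ => ?_
  rw [if_neg j.succ_ne_zero, Nat.add_sub_cancel]
  ring

theorem narayana_succ (n : ℕ) (x : ℂ) :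
    narayana (n + 1) x = x * semicircleFunctional x ((X + C (1 + x)) ^ n) := by
  rw [narayana_succ_eq_sum, ← succ_mul_freePathSum_sub,
    mul_div_cancel_left₀ _ (Nat.cast_add_one_ne_zero n), semicircleFunctional_apply,
    aeval_jacobiOperator_X_add_C_pow_single]

end Narayana

end

/-- For every integer `n ≥ 0` and every complex number `x`, the determinant of the
`2n × 2n` skew-symmetric matrix with entries `(j-i)·N_{i+j-2}(x)` (1-based; here
0-based, so the entry at `(i,j)` is `(j-i)·N_{i+j}(x)`) equals
`x^{2n²}·(∏_{k=0}^{n-1} (4k+1))²`. -/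
theorem det_narayana (n : ℕ) (x : ℂ) :
    (Matrix.of fun i j : Fin (2 * n) =>
        ((j.val : ℂ) - (i.val : ℂ)) * narayana (i.val + j.val) x).det =
      x ^ (2 * n ^ 2) * (∏ k ∈ Finset.range n, (4 * (k : ℂ) + 1)) ^ 2 :=
  det_narayana_general (N := fun m => narayana m x) (1 + x) x (fun m => narayana_succ m x) n
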